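/- arXiv:1805.07723 — 2 statements merged into one kernel-verified Lean document; each statement's English description precedes it below -/
import Mathlib

section
/- For all probability measures P and Q on a measurable space with P ≪ Q and every c ∈ [0,1], the c-primitive f-divergence is bounded by the Hellinger distance: I_{f_c}(P,Q) ≤ min(c, 1−c) · He(P,Q), where He(P,Q) := sqrt(He²(P,Q)). -/
open MeasureTheory

/-- The `c`-primitive `f`-divergence `I_{f_c}(P,Q) = ∫ f_c(dP/dQ) dQ`, where
`f_c(t) = min(1-c, c) - min(1-c, c*t)`. -/
noncomputable def Ifc {Ω : Type*} [MeasurableSpace Ω] (c : ℝ) (P Q : Measure Ω) : ℝ :=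
  ∫ x, (min (1 - c) c - min (1 - c) (c * ((P.rnDeriv Q) x).toReal)) ∂Q

/-- The squared Hellinger distance `He²(P,Q) = ∫ (√(dP/dμ) − √(dQ/dμ))² dμ`, computed with
respect to the common dominating measure `μ = P + Q`. -/
noncomputable def hellingerSq {Ω : Type*} [MeasurableSpace Ω] (P Q : Measure Ω) : ℝ :=
  ∫ x, (Real.sqrt ((P.rnDeriv (P + Q) x).toReal)
        - Real.sqrt ((Q.rnDeriv (P + Q) x).toReal)) ^ 2 ∂(P + Q)

/-!
For a measure `μ` dominating `P` and `Q`, with densities `p` and `q`, the divergence becomes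
`∫ min(c, 1-c) q - min((1-c) q, c p) dμ`. Mass of `P` singular to `Q` does not contribute to it,
because `f_c` is constant for large arguments. Since `min(c, 1-c) min(q, p) ≤ min((1-c) q, c p)`,
this is at most `min(c, 1-c) ∫ (q - min(q, p)) dμ`, that is, `min(c, 1-c)` times the total variation
distance of `P` and `Q`. Finally `|p - q| = |√p - √q| (√p + √q)`, so the Cauchy–Schwarz inequality
bounds the total variation distance by the Hellinger distance.
-/

section RealInequalities

variable {c p q : ℝ}

lemma abs_sub_eq_abs_sqrt_sub_sqrt_mul (hp : 0 ≤ p) (hq : 0 ≤ q) :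
    |p - q| = |√p - √q| * (√p + √q) := by
  calc |p - q| = |(√p - √q) * (√p + √q)| := by
        rw [mul_comm, ← sq_sub_sq, Real.sq_sqrt hp, Real.sq_sqrt hq]
    _ = |√p - √q| * (√p + √q) := by
        rw [abs_mul, abs_of_nonneg (add_nonneg p.sqrt_nonneg q.sqrt_nonneg)]

lemma sqrt_add_sqrt_sq_le (hp : 0 ≤ p) (hq : 0 ≤ q) : (√p + √q) ^ 2 ≤ 2 * (p + q) := by
  simpa only [Real.sq_sqrt hp, Real.sq_sqrt hq] using add_sq_le (a := √p) (b := √q)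

lemma min_mul_min_le_min_mul_mul (hc : c ∈ Set.Icc (0 : ℝ) 1) (hp : 0 ≤ p) (hq : 0 ≤ q) :
    min c (1 - c) * min q p ≤ min ((1 - c) * q) (c * p) := by
  have hmin : 0 ≤ min q p := le_min hq hp
  exact le_min
    (mul_le_mul (min_le_right _ _) (min_le_left _ _) hmin (sub_nonneg.2 hc.2))
    (mul_le_mul (min_le_left _ _) (min_le_right _ _) hmin hc.1)

lemma min_mul_sub_min_le_min_div_two_mul (hc : c ∈ Set.Icc (0 : ℝ) 1) (hp : 0 ≤ p) (hq : 0 ≤ q) :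
    min c (1 - c) * q - min ((1 - c) * q) (c * p) ≤
      min c (1 - c) / 2 * (q - p + |p - q|) := by
  have min_eq : min q p = (q + p - |p - q|) / 2 := by
    rw [inf_eq_half_smul_add_sub_abs_sub' ℝ, smul_eq_mul, inv_mul_eq_div]
  calc min c (1 - c) * q - min ((1 - c) * q) (c * p)
      ≤ min c (1 - c) * q - min c (1 - c) * min q p :=
        sub_le_sub_left (min_mul_min_le_min_mul_mul hc hp hq) _
    _ = min c (1 - c) / 2 * (q - p + |p - q|) := by rw [min_eq]; ring

end RealInequalities

section L2Estimates

variable {Ω : Type*} [MeasurableSpace Ω] {μ : Measure Ω} {f g : Ω → ℝ}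

lemma integral_mul_le_sqrt_integral_sq_mul_sqrt_integral_sq (hf_nonneg : 0 ≤ᵐ[μ] f)
    (hg_nonneg : 0 ≤ᵐ[μ] g) (hf : MemLp f 2 μ) (hg : MemLp g 2 μ) :
    ∫ x, f x * g x ∂μ ≤ √(∫ x, f x ^ 2 ∂μ) * √(∫ x, g x ^ 2 ∂μ) := by
  have ofReal_two : ENNReal.ofReal 2 = 2 := ENNReal.ofReal_ofNat 2
  simpa only [Real.rpow_two, ← Real.sqrt_eq_rpow] using
    integral_mul_le_Lp_mul_Lq_of_nonneg Real.HolderConjugate.two_two hf_nonneg hg_nonneg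
      (ofReal_two ▸ hf) (ofReal_two ▸ hg)

lemma memLp_two_sqrt (hf_nonneg : 0 ≤ᵐ[μ] f) (hf : Integrable f μ) :
    MemLp (fun x ↦ √(f x)) 2 μ := by
  rw [memLp_two_iff_integrable_sq (Real.continuous_sqrt.comp_aestronglyMeasurable hf.1)]
  exact hf.congr (hf_nonneg.mono fun x hx ↦ (Real.sq_sqrt hx).symm)

lemma integral_abs_sub_le_sqrt_mul_sqrt_integral_sqrt_sub_sqrt_sq (hf_nonneg : 0 ≤ᵐ[μ] f)
    (hg_nonneg : 0 ≤ᵐ[μ] g) (hf : Integrable f μ) (hg : Integrable g μ) :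
    ∫ x, |f x - g x| ∂μ ≤
      √(2 * (∫ x, f x ∂μ + ∫ x, g x ∂μ)) * √(∫ x, (√(f x) - √(g x)) ^ 2 ∂μ) := by
  have memLp_sqrt_f := memLp_two_sqrt hf_nonneg hf
  have memLp_sqrt_g := memLp_two_sqrt hg_nonneg hg
  have memLp_add : MemLp (fun x ↦ √(f x) + √(g x)) 2 μ := memLp_sqrt_f.add memLp_sqrt_g
  have memLp_abs_sub : MemLp (fun x ↦ |√(f x) - √(g x)|) 2 μ :=
    (memLp_sqrt_f.sub memLp_sqrt_g).abs
  have integral_sq_add_le :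
      ∫ x, (√(f x) + √(g x)) ^ 2 ∂μ ≤ 2 * (∫ x, f x ∂μ + ∫ x, g x ∂μ) := by
    rw [← integral_add hf hg, ← integral_const_mul]
    refine integral_mono_ae memLp_add.integrable_sq ((hf.add hg).const_mul 2) ?_
    filter_upwards [hf_nonneg, hg_nonneg] with x hfx hgx using sqrt_add_sqrt_sq_le hfx hgx
  calc ∫ x, |f x - g x| ∂μ
      = ∫ x, (√(f x) + √(g x)) * |√(f x) - √(g x)| ∂μ := by
        refine integral_congr_ae ?_
        filter_upwards [hf_nonneg, hg_nonneg] with x hfx hgx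
        rw [abs_sub_eq_abs_sqrt_sub_sqrt_mul hfx hgx, mul_comm]
    _ ≤ √(∫ x, (√(f x) + √(g x)) ^ 2 ∂μ) * √(∫ x, |√(f x) - √(g x)| ^ 2 ∂μ) :=
        integral_mul_le_sqrt_integral_sq_mul_sqrt_integral_sq
          (.of_forall fun x ↦ add_nonneg (Real.sqrt_nonneg _) (Real.sqrt_nonneg _))
          (.of_forall fun x ↦ abs_nonneg _) memLp_add memLp_abs_sub
    _ ≤ √(2 * (∫ x, f x ∂μ + ∫ x, g x ∂μ)) * √(∫ x, (√(f x) - √(g x)) ^ 2 ∂μ) := by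
        simp only [sq_abs]
        gcongr

end L2Estimates

section Divergence

variable {Ω : Type*} [MeasurableSpace Ω] {P Q μ : Measure Ω} {c : ℝ}

lemma Ifc_eq_integral_toReal_rnDeriv [SigmaFinite P] [SigmaFinite Q] [SigmaFinite μ]
    (hQ : Q ≪ μ) (hc : 0 ≤ c) :
    Ifc c P Q = ∫ x, (min c (1 - c) * (Q.rnDeriv μ x).toReal -
      min ((1 - c) * (Q.rnDeriv μ x).toReal) (c * (P.rnDeriv μ x).toReal)) ∂μ := by
  rw [Ifc, ← integral_rnDeriv_smul hQ]
  refine integral_congr_ae ?_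
  have chain_rule : ∀ᵐ x ∂μ, Q.rnDeriv μ x ≠ 0 →
      (P.rnDeriv Q * Q.rnDeriv μ) x = P.rnDeriv μ x :=
    Measure.ae_rnDeriv_ne_zero_imp_of_ae _ (Measure.rnDeriv_mul_rnDeriv' hQ)
  filter_upwards [chain_rule] with x chain_rule_x
  by_cases hq : Q.rnDeriv μ x = 0
  · simp [hq, mul_nonneg hc]
  · rw [← chain_rule_x hq, Pi.mul_apply, ENNReal.toReal_mul, smul_eq_mul, mul_sub,
      mul_min_of_nonneg (1 - c) (c * _) ENNReal.toReal_nonneg, min_comm c]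
    ring_nf

lemma Ifc_le_min_div_two_mul_integral_abs_sub [IsFiniteMeasure P] [IsFiniteMeasure Q]
    [SigmaFinite μ] (hP : P ≪ μ) (hQ : Q ≪ μ) (hc : c ∈ Set.Icc (0 : ℝ) 1) :
    Ifc c P Q ≤ min c (1 - c) / 2 * (Q.real Set.univ - P.real Set.univ +
      ∫ x, |(P.rnDeriv μ x).toReal - (Q.rnDeriv μ x).toReal| ∂μ) := by
  set p := fun x ↦ (P.rnDeriv μ x).toReal
  set q := fun x ↦ (Q.rnDeriv μ x).toReal
  have integrable_p : Integrable p μ := Measure.integrable_toReal_rnDeriv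
  have integrable_q : Integrable q μ := Measure.integrable_toReal_rnDeriv
  have integrable_sub : Integrable (fun x ↦ q x - p x) μ := integrable_q.sub integrable_p
  have integrable_abs_sub : Integrable (fun x ↦ |p x - q x|) μ :=
    (integrable_p.sub integrable_q).abs
  calc Ifc c P Q
      = ∫ x, (min c (1 - c) * q x - min ((1 - c) * q x) (c * p x)) ∂μ :=
        Ifc_eq_integral_toReal_rnDeriv hQ hc.1
    _ ≤ ∫ x, min c (1 - c) / 2 * (q x - p x + |p x - q x|) ∂μ := by
        refine integral_mono ?_ ((integrable_sub.add integrable_abs_sub).const_mul _) fun x ↦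
          min_mul_sub_min_le_min_div_two_mul hc ENNReal.toReal_nonneg ENNReal.toReal_nonneg
        exact (integrable_q.const_mul _).sub
          ((integrable_q.const_mul _).inf (integrable_p.const_mul _))
    _ = min c (1 - c) / 2 *
          (Q.real Set.univ - P.real Set.univ + ∫ x, |p x - q x| ∂μ) := by
        rw [integral_const_mul, integral_add integrable_sub integrable_abs_sub,
          integral_sub integrable_q integrable_p, Measure.integral_toReal_rnDeriv hQ,
          Measure.integral_toReal_rnDeriv hP]

theorem primitive_fdiv_le_hellinger_general (P Q : Measure Ω) [IsFiniteMeasure P]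
    [IsFiniteMeasure Q] (hc : c ∈ Set.Icc (0 : ℝ) 1) :
    Ifc c P Q ≤ min c (1 - c) / 2 * (Q.real Set.univ - P.real Set.univ +
      √(2 * (P.real Set.univ + Q.real Set.univ)) * √(hellingerSq P Q)) := by
  have hP : P ≪ P + Q := Measure.AbsolutelyContinuous.rfl.add_right Q
  have hQ : Q ≪ P + Q := Measure.AbsolutelyContinuous.rfl.add_right' P
  have hmin : 0 ≤ min c (1 - c) := le_min hc.1 (sub_nonneg.2 hc.2)
  have integral_abs_sub_le := integral_abs_sub_le_sqrt_mul_sqrt_integral_sqrt_sub_sqrt_sq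
    (.of_forall fun x ↦ ENNReal.toReal_nonneg) (.of_forall fun x ↦ ENNReal.toReal_nonneg)
    (Measure.integrable_toReal_rnDeriv (μ := P) (ν := P + Q))
    (Measure.integrable_toReal_rnDeriv (μ := Q) (ν := P + Q))
  rw [Measure.integral_toReal_rnDeriv hP, Measure.integral_toReal_rnDeriv hQ]
    at integral_abs_sub_le
  refine (Ifc_le_min_div_two_mul_integral_abs_sub hP hQ hc).trans ?_
  gcongr
  exact integral_abs_sub_le

end Divergence

/-- `I_{f_c}(P,Q) ≤ min(c, 1−c) · He(P,Q)`, where `He(P,Q) = √(He²(P,Q))`. -/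
theorem primitive_fdiv_le_hellinger
    {Ω : Type*} [MeasurableSpace Ω] (P Q : Measure Ω)
    [IsProbabilityMeasure P] [IsProbabilityMeasure Q]
    (hPQ : P ≪ Q) (c : ℝ) (hc : c ∈ Set.Icc (0 : ℝ) 1) :
    Ifc c P Q ≤ min c (1 - c) * Real.sqrt (hellingerSq P Q) := by
  have bound := primitive_fdiv_le_hellinger_general P Q hc
  rw [probReal_univ, probReal_univ, show √(2 * (1 + 1)) = 2 by norm_num] at bound
  linarith
end

section
/- (Hellinger form of Assouad's lemma.) Let d ∈ ℕ, c ∈ [0,1], and let {P_θ : θ ∈ {−1,1}^d} be probability measures on an observation space O such that for some α(c) ≥ 0, He²(P_θ, P_{θ′}) ≤ α(c) whenever θ and θ′ differ in exactly one coordinate (ρ_Ha(θ, θ′) = 1). Then the minimax risk R*_{ρ_Ha} of estimating θ from n i.i.d. observations under Hamming loss (R*_{ρ_Ha} := inf over randomized estimators θ̂ of max over θ of E_{O ∼ P_θⁿ} E_{θ̃ ∼ θ̂(O)}[ρ_Ha(θ, θ̃)]) satisfies R*_{ρ_Ha} ≥ d · min(c, 1−c) · (1 − sqrt(α(c)·n)).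 -/
open MeasureTheory ProbabilityTheory

/-!
The Hamming risk at `θ` is the sum over coordinates `i` of the probability that the estimator gets
`θ i` wrong. Pairing each `θ` with the vertex that differs from it only in coordinate `i` makes
this a two-point testing problem: the two error probabilities add up to at least `1 - √He²`, since
by Cauchy–Schwarz no `[0, 1]`-valued test separates the two laws by more than `√He²`. For samples of
size `n`, multiplicativity of the Hellinger affinity `1 - He² / 2` gives `He² ≤ n α`. Averaging over
the cube bounds the risk below by `d / 2 * (1 - √(α n))⁺`, and `min c (1 - c) ≤ 1 / 2`.
-/

section ProductDensity

lemma lintegral_fin_prod_eq_prod {n : ℕ} {X : Fin n → Type*} [∀ i, MeasurableSpace (X i)]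
    {μ : ∀ i, Measure (X i)} [∀ i, SigmaFinite (μ i)] {f : ∀ i, X i → ENNReal}
    (hf : ∀ i, Measurable (f i)) :
    ∫⁻ x, ∏ i, f i (x i) ∂(Measure.pi μ) = ∏ i, ∫⁻ y, f i y ∂(μ i) := by
  induction n with
  | zero => simp
  | succ n ih =>
    have hf_tail : Measurable fun x : (j : Fin n) → X j.succ ↦ ∏ j, f j.succ (x j) := by
      fun_prop
    calc ∫⁻ x, ∏ i, f i (x i) ∂(Measure.pi μ)
        = ∫⁻ z : X 0 × ((j : Fin n) → X j.succ), f 0 z.1 * ∏ j, f j.succ (z.2 j)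
            ∂((μ 0).prod (Measure.pi fun j ↦ μ j.succ)) := by
          simp only [Fin.prod_univ_succ]
          exact (measurePreserving_piFinSuccAbove μ 0).lintegral_comp
            (((hf 0).comp measurable_fst).mul (hf_tail.comp measurable_snd))
      _ = ∏ i, ∫⁻ y, f i y ∂(μ i) := by
          rw [lintegral_prod_mul (hf 0).aemeasurable hf_tail.aemeasurable,
            ih fun j ↦ hf j.succ, Fin.prod_univ_succ]

variable {ι : Type*} [Fintype ι] {X : ι → Type*} [∀ i, MeasurableSpace (X i)]

lemma lintegral_fintype_prod_eq_prod {μ : ∀ i, Measure (X i)} [∀ i, SigmaFinite (μ i)]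
    {f : ∀ i, X i → ENNReal} (hf : ∀ i, Measurable (f i)) :
    ∫⁻ x, ∏ i, f i (x i) ∂(Measure.pi μ) = ∏ i, ∫⁻ y, f i y ∂(μ i) := by
  let e := (Fintype.equivFin ι).symm
  rw [← (measurePreserving_piCongrLeft _ e).lintegral_comp (by fun_prop)]
  simp_rw [← e.prod_comp, MeasurableEquiv.coe_piCongrLeft, Equiv.piCongrLeft_apply_apply]
  exact lintegral_fin_prod_eq_prod fun j ↦ hf (e j)

variable {P μ : ∀ i, Measure (X i)} [∀ i, SigmaFinite (P i)] [∀ i, SigmaFinite (μ i)]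

lemma pi_eq_withDensity_prod_rnDeriv (hP : ∀ i, P i ≪ μ i) :
    Measure.pi P = (Measure.pi μ).withDensity fun x ↦ ∏ i, (P i).rnDeriv (μ i) (x i) := by
  refine Measure.pi_eq fun s hs ↦ ?_
  rw [withDensity_apply _ (.univ_pi hs), Measure.restrict_pi_pi,
    lintegral_fintype_prod_eq_prod fun i ↦ Measure.measurable_rnDeriv (P i) (μ i)]
  exact Finset.prod_congr rfl fun i _ ↦ Measure.setLIntegral_rnDeriv (hP i) (s i)

lemma pi_absolutelyContinuous_pi (hP : ∀ i, P i ≪ μ i) : Measure.pi P ≪ Measure.pi μ := by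
  rw [pi_eq_withDensity_prod_rnDeriv hP]
  exact withDensity_absolutelyContinuous _ _

lemma rnDeriv_pi_ae_eq_prod_rnDeriv (hP : ∀ i, P i ≪ μ i) :
    (Measure.pi P).rnDeriv (Measure.pi μ)
      =ᵐ[Measure.pi μ] fun x ↦ ∏ i, (P i).rnDeriv (μ i) (x i) := by
  rw [pi_eq_withDensity_prod_rnDeriv hP]
  exact Measure.rnDeriv_withDensity _ (by fun_prop)

end ProductDensity

section Hellinger

variable {Ω : Type*} [MeasurableSpace Ω] {P Q μ : Measure Ω}

/-- The Hellinger affinity (Bhattacharyya coefficient) `∫ √(dP/dμ · dQ/dμ) dμ`, computed, like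
`hellingerSq`, with respect to `μ = P + Q`. Unlike `hellingerSq` it is multiplicative over
products. -/
noncomputable def hellingerAffinity (P Q : Measure Ω) : ℝ :=
  ∫ x, √((P.rnDeriv (P + Q) x).toReal * (Q.rnDeriv (P + Q) x).toReal) ∂(P + Q)

lemma hellingerSq_nonneg (P Q : Measure Ω) : 0 ≤ hellingerSq P Q :=
  integral_nonneg fun _ ↦ sq_nonneg _

lemma hellingerAffinity_nonneg (P Q : Measure Ω) : 0 ≤ hellingerAffinity P Q :=
  integral_nonneg fun _ ↦ Real.sqrt_nonneg _

lemma hellingerAffinity_eq_integral_sqrt_rnDeriv_mul [SigmaFinite P] [SigmaFinite Q]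
    [SigmaFinite μ] (hP : P ≪ μ) (hQ : Q ≪ μ) :
    hellingerAffinity P Q = ∫ x, √((P.rnDeriv μ x).toReal * (Q.rnDeriv μ x).toReal) ∂μ := by
  have hPQ : P + Q ≪ μ := Measure.AbsolutelyContinuous.add_left hP hQ
  have hP' : P ≪ P + Q := Measure.AbsolutelyContinuous.rfl.add_right _
  have hQ' : Q ≪ P + Q := (Measure.le_add_left le_rfl).absolutelyContinuous
  rw [hellingerAffinity, ← integral_toReal_rnDeriv_mul hPQ]
  refine integral_congr_ae ?_
  filter_upwards [Measure.rnDeriv_mul_rnDeriv (κ := μ) hP',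
    Measure.rnDeriv_mul_rnDeriv (κ := μ) hQ'] with x hPx hQx
  rw [← hPx, ← hQx, Pi.mul_apply, Pi.mul_apply, ENNReal.toReal_mul, ENNReal.toReal_mul,
    mul_mul_mul_comm, ← pow_two, Real.sqrt_mul' _ (sq_nonneg _),
    Real.sqrt_sq ENNReal.toReal_nonneg, mul_comm]

lemma integrable_sqrt_mul {f g : Ω → ℝ} (hf : Integrable f μ) (hg : Integrable g μ)
    (hf_nonneg : 0 ≤ f) (hg_nonneg : 0 ≤ g) : Integrable (fun x ↦ √(f x * g x)) μ := by
  refine (hf.add hg).mono' (Real.continuous_sqrt.comp_aestronglyMeasurable (hf.1.mul hg.1))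
    (.of_forall fun x ↦ ?_)
  have hfx : 0 ≤ f x := hf_nonneg x
  have hgx : 0 ≤ g x := hg_nonneg x
  rw [Real.norm_of_nonneg (Real.sqrt_nonneg _), Pi.add_apply]
  exact Real.sqrt_le_iff.mpr ⟨by positivity, by nlinarith⟩

lemma hellingerSq_eq_mass_add_mass_sub_affinity (P Q : Measure Ω) [IsFiniteMeasure P]
    [IsFiniteMeasure Q] :
    hellingerSq P Q = P.real Set.univ + Q.real Set.univ - 2 * hellingerAffinity P Q := by
  have hP : P ≪ P + Q := Measure.AbsolutelyContinuous.rfl.add_right _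
  have hQ : Q ≪ P + Q := (Measure.le_add_left le_rfl).absolutelyContinuous
  have hp : Integrable (fun x ↦ (P.rnDeriv (P + Q) x).toReal) (P + Q) :=
    Measure.integrable_toReal_rnDeriv
  have hq : Integrable (fun x ↦ (Q.rnDeriv (P + Q) x).toReal) (P + Q) :=
    Measure.integrable_toReal_rnDeriv
  have sq_sub (a b : ENNReal) :
      (√a.toReal - √b.toReal) ^ 2 = a.toReal + b.toReal - 2 * √(a.toReal * b.toReal) := by
    rw [sub_sq, Real.sq_sqrt ENNReal.toReal_nonneg, Real.sq_sqrt ENNReal.toReal_nonneg,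
      Real.sqrt_mul ENNReal.toReal_nonneg]
    ring
  have hpq := integrable_sqrt_mul hp hq (fun _ ↦ ENNReal.toReal_nonneg)
    fun _ ↦ ENNReal.toReal_nonneg
  simp_rw [hellingerSq, sq_sub]
  rw [integral_sub (f := fun _ ↦ _ + _) (hp.add hq) (hpq.const_mul 2), integral_add hp hq,
    integral_const_mul, Measure.integral_toReal_rnDeriv hP, Measure.integral_toReal_rnDeriv hQ,
    hellingerAffinity]

lemma hellingerSq_eq_two_sub_affinity (P Q : Measure Ω) [IsProbabilityMeasure P]
    [IsProbabilityMeasure Q] : hellingerSq P Q = 2 - 2 * hellingerAffinity P Q := by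
  rw [hellingerSq_eq_mass_add_mass_sub_affinity, probReal_univ, probReal_univ]
  norm_num

lemma hellingerAffinity_le_one (P Q : Measure Ω) [IsProbabilityMeasure P] [IsProbabilityMeasure Q] :
    hellingerAffinity P Q ≤ 1 := by
  linarith [hellingerSq_nonneg P Q, hellingerSq_eq_two_sub_affinity P Q]

end Hellinger

section Tensorization

variable {ι : Type*} [Fintype ι] {X : ι → Type*} [∀ i, MeasurableSpace (X i)]

lemma hellingerAffinity_pi (P Q : ∀ i, Measure (X i)) [∀ i, SigmaFinite (P i)]
    [∀ i, SigmaFinite (Q i)] :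
    hellingerAffinity (Measure.pi P) (Measure.pi Q) = ∏ i, hellingerAffinity (P i) (Q i) := by
  have hP (i : ι) : P i ≪ P i + Q i := Measure.AbsolutelyContinuous.rfl.add_right _
  have hQ (i : ι) : Q i ≪ P i + Q i := (Measure.le_add_left le_rfl).absolutelyContinuous
  simp_rw [hellingerAffinity_eq_integral_sqrt_rnDeriv_mul (pi_absolutelyContinuous_pi hP)
    (pi_absolutelyContinuous_pi hQ), hellingerAffinity, ← integral_fintype_prod_eq_prod]
  refine integral_congr_ae ?_
  filter_upwards [rnDeriv_pi_ae_eq_prod_rnDeriv hP, rnDeriv_pi_ae_eq_prod_rnDeriv hQ]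
    with x hPx hQx
  rw [hPx, hQx, ENNReal.toReal_prod, ENNReal.toReal_prod, ← Finset.prod_mul_distrib,
    Real.sqrt_prod _ fun i _ ↦ by positivity]

lemma one_sub_prod_le_sum_one_sub {κ : Type*} (s : Finset κ) {a : κ → ℝ}
    (ha_nonneg : ∀ i ∈ s, 0 ≤ a i) (ha_le_one : ∀ i ∈ s, a i ≤ 1) :
    1 - ∏ i ∈ s, a i ≤ ∑ i ∈ s, (1 - a i) := by
  induction s using Finset.cons_induction with
  | empty => simp
  | cons j s hj ih =>
    rw [Finset.forall_mem_cons] at ha_nonneg ha_le_one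
    have hprod : ∏ i ∈ s, a i ≤ 1 := Finset.prod_le_one ha_nonneg.2 ha_le_one.2
    rw [Finset.prod_cons, Finset.sum_cons]
    nlinarith [ih ha_nonneg.2 ha_le_one.2, ha_le_one.1]

lemma hellingerSq_pi_le_sum (P Q : ∀ i, Measure (X i)) [∀ i, IsProbabilityMeasure (P i)]
    [∀ i, IsProbabilityMeasure (Q i)] :
    hellingerSq (Measure.pi P) (Measure.pi Q) ≤ ∑ i, hellingerSq (P i) (Q i) := by
  have h := one_sub_prod_le_sum_one_sub Finset.univ
    (fun i _ ↦ hellingerAffinity_nonneg (P i) (Q i))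
    (fun i _ ↦ hellingerAffinity_le_one (P i) (Q i))
  calc hellingerSq (Measure.pi P) (Measure.pi Q)
      = 2 * (1 - ∏ i, hellingerAffinity (P i) (Q i)) := by
        rw [hellingerSq_eq_two_sub_affinity, hellingerAffinity_pi]
        ring
    _ ≤ 2 * ∑ i, (1 - hellingerAffinity (P i) (Q i)) := by gcongr
    _ = ∑ i, hellingerSq (P i) (Q i) := by
        simp_rw [hellingerSq_eq_two_sub_affinity, Finset.mul_sum, mul_sub, mul_one]

end Tensorization

section Testing

variable {Ω : Type*} [MeasurableSpace Ω]

lemma integral_mul_le_sqrt_integral_sq_mul {μ : Measure Ω} {f g : Ω → ℝ} (hf : MemLp f 2 μ)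
    (hg : MemLp g 2 μ) (hf_nonneg : 0 ≤ f) (hg_nonneg : 0 ≤ g) :
    ∫ x, f x * g x ∂μ ≤ √(∫ x, f x ^ 2 ∂μ) * √(∫ x, g x ^ 2 ∂μ) := by
  have h := integral_mul_le_Lp_mul_Lq_of_nonneg Real.HolderConjugate.two_two
    (.of_forall hf_nonneg) (.of_forall hg_nonneg) (by simpa using hf) (by simpa using hg)
  simpa only [Real.rpow_two, ← Real.sqrt_eq_rpow] using h

lemma memLp_two_sqrt_toReal_rnDeriv (P μ : Measure Ω) [IsFiniteMeasure P] :
    MemLp (fun x ↦ √(P.rnDeriv μ x).toReal) 2 μ := by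
  rw [memLp_two_iff_integrable_sq
    (Measure.measurable_rnDeriv P μ).ennreal_toReal.sqrt.aestronglyMeasurable]
  simpa only [Real.sq_sqrt ENNReal.toReal_nonneg] using Measure.integrable_toReal_rnDeriv

variable (P Q : Measure Ω) [IsProbabilityMeasure P] [IsProbabilityMeasure Q]

lemma integral_sq_add_sqrt_rnDeriv_le_four :
    ∫ x, (√(P.rnDeriv (P + Q) x).toReal + √(Q.rnDeriv (P + Q) x).toReal) ^ 2 ∂(P + Q) ≤ 4 := by
  have hP : P ≪ P + Q := Measure.AbsolutelyContinuous.rfl.add_right _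
  have hQ : Q ≪ P + Q := (Measure.le_add_left le_rfl).absolutelyContinuous
  have hp : Integrable (fun x ↦ (P.rnDeriv (P + Q) x).toReal) (P + Q) :=
    Measure.integrable_toReal_rnDeriv
  have hq : Integrable (fun x ↦ (Q.rnDeriv (P + Q) x).toReal) (P + Q) :=
    Measure.integrable_toReal_rnDeriv
  calc ∫ x, (√(P.rnDeriv (P + Q) x).toReal + √(Q.rnDeriv (P + Q) x).toReal) ^ 2 ∂(P + Q)
      ≤ ∫ x, 2 * ((P.rnDeriv (P + Q) x).toReal + (Q.rnDeriv (P + Q) x).toReal) ∂(P + Q) := by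
        refine integral_mono_of_nonneg (.of_forall fun _ ↦ sq_nonneg _) ((hp.add hq).const_mul 2)
          (.of_forall fun x ↦ add_sq_le.trans_eq ?_)
        rw [Real.sq_sqrt ENNReal.toReal_nonneg, Real.sq_sqrt ENNReal.toReal_nonneg]
    _ = 4 := by
        rw [integral_const_mul, integral_add hp hq, Measure.integral_toReal_rnDeriv hP,
          Measure.integral_toReal_rnDeriv hQ, probReal_univ, probReal_univ]
        norm_num

lemma integral_abs_rnDeriv_sub_le_two_mul_sqrt_hellingerSq :
    ∫ x, |(P.rnDeriv (P + Q) x).toReal - (Q.rnDeriv (P + Q) x).toReal| ∂(P + Q)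
      ≤ 2 * √(hellingerSq P Q) := by
  set a : Ω → ℝ := fun x ↦ √(P.rnDeriv (P + Q) x).toReal
  set b : Ω → ℝ := fun x ↦ √(Q.rnDeriv (P + Q) x).toReal
  have ha : MemLp a 2 (P + Q) := memLp_two_sqrt_toReal_rnDeriv P (P + Q)
  have hb : MemLp b 2 (P + Q) := memLp_two_sqrt_toReal_rnDeriv Q (P + Q)
  have ha_nonneg (x : Ω) : 0 ≤ a x := Real.sqrt_nonneg _
  have hb_nonneg (x : Ω) : 0 ≤ b x := Real.sqrt_nonneg _
  have abs_sub_eq (x : Ω) : |(P.rnDeriv (P + Q) x).toReal - (Q.rnDeriv (P + Q) x).toReal|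
      = |a x - b x| * (a x + b x) := by
    rw [← Real.sq_sqrt (ENNReal.toReal_nonneg (a := P.rnDeriv (P + Q) x)),
      ← Real.sq_sqrt (ENNReal.toReal_nonneg (a := Q.rnDeriv (P + Q) x)), sq_sub_sq, abs_mul,
      abs_of_nonneg (add_nonneg (ha_nonneg x) (hb_nonneg x)), mul_comm]
  calc ∫ x, |(P.rnDeriv (P + Q) x).toReal - (Q.rnDeriv (P + Q) x).toReal| ∂(P + Q)
      = ∫ x, |a x - b x| * (a x + b x) ∂(P + Q) := by simp_rw [abs_sub_eq]
    _ ≤ √(∫ x, |a x - b x| ^ 2 ∂(P + Q)) * √(∫ x, (a x + b x) ^ 2 ∂(P + Q)) :=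
        integral_mul_le_sqrt_integral_sq_mul (ha.sub hb).abs (ha.add hb)
          (fun _ ↦ abs_nonneg _) fun x ↦ add_nonneg (ha_nonneg x) (hb_nonneg x)
    _ ≤ √(hellingerSq P Q) * √4 := by
        simp_rw [sq_abs]
        gcongr
        · rfl
        · exact integral_sq_add_sqrt_rnDeriv_le_four P Q
    _ = 2 * √(hellingerSq P Q) := by
        rw [show (4 : ℝ) = 2 ^ 2 by norm_num, Real.sqrt_sq zero_le_two, mul_comm]

lemma integral_sub_integral_le_two_mul_mul_sqrt_hellingerSq {f : Ω → ℝ} {M : ℝ} (hf : Measurable f)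
    (hf_le : ∀ x, |f x| ≤ M) :
    ∫ x, f x ∂P - ∫ x, f x ∂Q ≤ 2 * M * √(hellingerSq P Q) := by
  have hP : P ≪ P + Q := Measure.AbsolutelyContinuous.rfl.add_right _
  have hQ : Q ≪ P + Q := (Measure.le_add_left le_rfl).absolutelyContinuous
  have hM : 0 ≤ M := (abs_nonneg _).trans (hf_le P.nonempty_of_neZero.some)
  set p : Ω → ℝ := fun x ↦ (P.rnDeriv (P + Q) x).toReal
  set q : Ω → ℝ := fun x ↦ (Q.rnDeriv (P + Q) x).toReal
  have hp : Integrable p (P + Q) := Measure.integrable_toReal_rnDeriv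
  have hq : Integrable q (P + Q) := Measure.integrable_toReal_rnDeriv
  have hpf : Integrable (fun x ↦ p x * f x) (P + Q) :=
    hp.mul_bdd hf.aestronglyMeasurable (.of_forall hf_le)
  have hqf : Integrable (fun x ↦ q x * f x) (P + Q) :=
    hq.mul_bdd hf.aestronglyMeasurable (.of_forall hf_le)
  calc ∫ x, f x ∂P - ∫ x, f x ∂Q
      = ∫ x, p x * f x - q x * f x ∂(P + Q) := by
        rw [integral_sub hpf hqf, integral_toReal_rnDeriv_mul hP, integral_toReal_rnDeriv_mul hQ]
    _ ≤ ∫ x, |p x - q x| * M ∂(P + Q) := by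
        refine integral_mono (hpf.sub hqf) ((hp.sub hq).abs.mul_const M) fun x ↦ ?_
        calc p x * f x - q x * f x ≤ |(p x - q x) * f x| := by rw [sub_mul]; exact le_abs_self _
          _ ≤ |p x - q x| * M := by rw [abs_mul]; gcongr; exact hf_le x
    _ ≤ 2 * √(hellingerSq P Q) * M := by
        rw [integral_mul_const]
        gcongr
        exact integral_abs_rnDeriv_sub_le_two_mul_sqrt_hellingerSq P Q
    _ = 2 * M * √(hellingerSq P Q) := by ring

-- Centring `f` at `1 / 2` is free since `P` and `Q` have equal mass, and halves its sup norm.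
lemma integral_sub_integral_le_sqrt_hellingerSq {f : Ω → ℝ} (hf : Measurable f)
    (hf_mem : ∀ x, f x ∈ Set.Icc 0 1) :
    ∫ x, f x ∂P - ∫ x, f x ∂Q ≤ √(hellingerSq P Q) := by
  have abs_centred_le (x : Ω) : |f x - 1 / 2| ≤ 1 / 2 :=
    abs_le.mpr ⟨by linarith [(hf_mem x).1], by linarith [(hf_mem x).2]⟩
  have integral_centred (ν : Measure Ω) [IsProbabilityMeasure ν] :
      ∫ x, (f x - 1 / 2) ∂ν = (∫ x, f x ∂ν) - 1 / 2 := by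
    have hf_int : Integrable f ν := .of_mem_Icc 0 1 hf.aemeasurable (.of_forall hf_mem)
    simp [integral_sub hf_int (integrable_const _)]
  have h := integral_sub_integral_le_two_mul_mul_sqrt_hellingerSq P Q (hf.sub_const (1 / 2))
    abs_centred_le
  rw [integral_centred, integral_centred] at h
  linarith

end Testing

section Assouad

variable {ι : Type*} {X : Type*} [MeasurableSpace X]

/-- The cube vertex obtained from `θ` by changing its `i`-th sign. -/
def flipCoord [DecidableEq ι] (i : ι) (θ : ι → Bool) : ι → Bool :=
  Function.update θ i (!θ i)

lemma flipCoord_involutive [DecidableEq ι] (i : ι) : Function.Involutive (flipCoord i) := by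
  intro θ
  simp [flipCoord]

lemma hammingDist_flipCoord [Fintype ι] [DecidableEq ι] (i : ι) (θ : ι → Bool) :
    hammingDist θ (flipCoord i θ) = 1 := by
  rw [hammingDist, Finset.card_eq_one]
  refine ⟨i, Finset.ext fun j ↦ ?_⟩
  rw [Finset.mem_filter_univ, Finset.mem_singleton]
  rcases eq_or_ne j i with rfl | hj
  · simp [flipCoord]
  · simp [flipCoord, hj]

/-- The probability that the randomized estimator `κ`, fed with an observation drawn from `P`,
gets the `i`-th coordinate of `θ` wrong. -/
noncomputable def coordError (P : Measure X) (κ : Kernel X (ι → Bool)) (θ : ι → Bool) (i : ι) : ℝ :=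
  ∫ x, (κ x).real {t | θ i ≠ t i} ∂P

lemma measurableSet_coord_ne (θ : ι → Bool) (i : ι) :
    MeasurableSet {t : ι → Bool | θ i ≠ t i} :=
  (measurableSet_eq_fun measurable_const (measurable_pi_apply i)).compl

lemma measurable_measureReal_coord_ne (κ : Kernel X (ι → Bool)) (θ : ι → Bool) (i : ι) :
    Measurable fun x ↦ (κ x).real {t | θ i ≠ t i} :=
  (κ.measurable_coe (measurableSet_coord_ne θ i)).ennreal_toReal

lemma integrable_measureReal_coord_ne (P : Measure X) [IsFiniteMeasure P]
    (κ : Kernel X (ι → Bool)) [IsMarkovKernel κ] (θ : ι → Bool) (i : ι) :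
    Integrable (fun x ↦ (κ x).real {t | θ i ≠ t i}) P :=
  .of_mem_Icc 0 1 (measurable_measureReal_coord_ne κ θ i).aemeasurable
    (.of_forall fun _ ↦ ⟨measureReal_nonneg, measureReal_le_one⟩)

lemma integral_hammingDist_eq_sum_measureReal_coord_ne [Fintype ι]
    (ν : Measure (ι → Bool)) [IsFiniteMeasure ν] (θ : ι → Bool) :
    ∫ t, (hammingDist θ t : ℝ) ∂ν = ∑ i, ν.real {t | θ i ≠ t i} := by
  have hammingDist_eq (t : ι → Bool) :
      (hammingDist θ t : ℝ) = ∑ i, {t : ι → Bool | θ i ≠ t i}.indicator 1 t := by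
    simp [hammingDist, Finset.card_filter, Set.indicator_apply]
  simp_rw [hammingDist_eq]
  rw [integral_finsetSum _ fun i _ ↦ .of_finite]
  exact Finset.sum_congr rfl fun i _ ↦ integral_indicator_one (measurableSet_coord_ne θ i)

lemma integral_hammingDist_eq_sum_coordError [Fintype ι] (P : Measure X) [IsFiniteMeasure P]
    (κ : Kernel X (ι → Bool)) [IsMarkovKernel κ] (θ : ι → Bool) :
    ∫ x, (∫ t, (hammingDist θ t : ℝ) ∂(κ x)) ∂P = ∑ i, coordError P κ θ i := by
  simp_rw [integral_hammingDist_eq_sum_measureReal_coord_ne]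
  exact integral_finsetSum _ fun i _ ↦ integrable_measureReal_coord_ne P κ θ i

variable (P Q : Measure X) [IsProbabilityMeasure P] [IsProbabilityMeasure Q]
  (κ : Kernel X (ι → Bool)) [IsMarkovKernel κ]

lemma coordError_flipCoord [DecidableEq ι] (θ : ι → Bool) (i : ι) :
    coordError P κ (flipCoord i θ) i = 1 - coordError P κ θ i := by
  have flip_ne_eq_compl : {t : ι → Bool | flipCoord i θ i ≠ t i} = {t | θ i ≠ t i}ᶜ := by
    ext t
    simp [flipCoord]
  simp_rw [coordError, flip_ne_eq_compl,
    probReal_compl_eq_one_sub (measurableSet_coord_ne θ i)]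
  simp [integral_sub (integrable_const 1) (integrable_measureReal_coord_ne P κ θ i)]

lemma one_sub_sqrt_hellingerSq_le_coordError_add [DecidableEq ι] (θ : ι → Bool) (i : ι) :
    1 - √(hellingerSq P Q) ≤ coordError P κ θ i + coordError Q κ (flipCoord i θ) i := by
  have h := integral_sub_integral_le_sqrt_hellingerSq P Q
    (measurable_measureReal_coord_ne κ (flipCoord i θ) i)
    fun _ ↦ ⟨measureReal_nonneg, measureReal_le_one⟩
  have hP := coordError_flipCoord P κ θ i
  simp only [coordError] at hP ⊢
  linarith

end Assouad

section Minimax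

variable {ι : Type*} [Fintype ι] {X : Type*} [MeasurableSpace X]

/-- The minimax risk, under Hamming loss, of estimating the cube vertex `θ` from one observation
of law `P θ`. Estimators are randomized, i.e. Markov kernels; a sample of size `n` is covered by
taking `P θ` to be an `n`-fold product. -/
noncomputable def hammingMinimaxRisk (P : (ι → Bool) → Measure X) : ℝ :=
  ⨅ κ : {κ : Kernel X (ι → Bool) // IsMarkovKernel κ},
    ⨆ θ, ∫ x, (∫ t, (hammingDist θ t : ℝ) ∂(κ.1 x)) ∂(P θ)

variable {P : (ι → Bool) → Measure X} [∀ θ, IsProbabilityMeasure (P θ)] {ε : ℝ}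

lemma card_mul_le_sum_coordError [DecidableEq ι]
    (hP : ∀ θ θ', hammingDist θ θ' = 1 → hellingerSq (P θ) (P θ') ≤ ε)
    (κ : Kernel X (ι → Bool)) [IsMarkovKernel κ] (i : ι) :
    Fintype.card (ι → Bool) * ((1 - √ε) / 2) ≤ ∑ θ, coordError (P θ) κ θ i := by
  have pair_le (θ : ι → Bool) : 1 - √ε ≤
      coordError (P θ) κ θ i + coordError (P (flipCoord i θ)) κ (flipCoord i θ) i :=
    (sub_le_sub_left (Real.sqrt_le_sqrt (hP _ _ (hammingDist_flipCoord i θ))) 1).trans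
      (one_sub_sqrt_hellingerSq_le_coordError_add _ _ κ θ i)
  have sum_flip : ∑ θ, coordError (P (flipCoord i θ)) κ (flipCoord i θ) i
      = ∑ θ, coordError (P θ) κ θ i :=
    Equiv.sum_comp (flipCoord_involutive i).toPerm fun θ ↦ coordError (P θ) κ θ i
  have h := Finset.card_nsmul_le_sum Finset.univ _ _ fun θ _ ↦ pair_le θ
  rw [Finset.sum_add_distrib, sum_flip, Finset.card_univ, nsmul_eq_mul] at h
  linarith

lemma exists_card_mul_le_integral_hammingDist
    (hP : ∀ θ θ', hammingDist θ θ' = 1 → hellingerSq (P θ) (P θ') ≤ ε)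
    (κ : Kernel X (ι → Bool)) [IsMarkovKernel κ] :
    ∃ θ, Fintype.card ι / 2 * (1 - √ε) ≤ ∫ x, (∫ t, (hammingDist θ t : ℝ) ∂(κ x)) ∂(P θ) := by
  classical
  simp_rw [integral_hammingDist_eq_sum_coordError]
  suffices h : ∑ _θ : ι → Bool, Fintype.card ι / 2 * (1 - √ε)
      ≤ ∑ θ, ∑ i, coordError (P θ) κ θ i by
    obtain ⟨θ, -, hθ⟩ := Finset.exists_le_of_sum_le Finset.univ_nonempty h
    exact ⟨θ, hθ⟩
  calc ∑ _θ : ι → Bool, Fintype.card ι / 2 * (1 - √ε)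
      = ∑ _i : ι, Fintype.card (ι → Bool) * ((1 - √ε) / 2) := by
        simp only [Finset.sum_const, Finset.card_univ, nsmul_eq_mul]
        ring
    _ ≤ ∑ i, ∑ θ, coordError (P θ) κ θ i :=
        Finset.sum_le_sum fun i _ ↦ card_mul_le_sum_coordError hP κ i
    _ = ∑ θ, ∑ i, coordError (P θ) κ θ i := Finset.sum_comm

lemma half_card_mul_posPart_le_hammingMinimaxRisk
    (hP : ∀ θ θ', hammingDist θ θ' = 1 → hellingerSq (P θ) (P θ') ≤ ε) :
    Fintype.card ι / 2 * (1 - √ε)⁺ ≤ hammingMinimaxRisk P := by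
  have : Nonempty {κ : Kernel X (ι → Bool) // IsMarkovKernel κ} :=
    ⟨⟨Kernel.const X (Measure.dirac fun _ ↦ true), inferInstance⟩⟩
  refine le_ciInf fun ⟨κ, _⟩ ↦ ?_
  have risk_le_iSup := le_ciSup (Set.finite_range fun θ : ι → Bool ↦
    ∫ x, (∫ t, (hammingDist θ t : ℝ) ∂(κ x)) ∂(P θ)).bddAbove
  obtain ⟨θ, hθ⟩ := exists_card_mul_le_integral_hammingDist hP κ
  rcases le_total 0 (1 - √ε) with h | h
  · rw [posPart_of_nonneg h]
    exact hθ.trans (risk_le_iSup θ)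
  · rw [posPart_of_nonpos h, mul_zero]
    exact (integral_nonneg fun _ ↦ integral_nonneg fun _ ↦ Nat.cast_nonneg _).trans
      (risk_le_iSup θ)

end Minimax

lemma mul_min_one_sub_mul_le_half_mul_posPart {c k : ℝ} (hc : c ∈ Set.Icc 0 1) (hk : 0 ≤ k)
    (x : ℝ) : k * min c (1 - c) * x ≤ k / 2 * x⁺ := by
  have min_nonneg : 0 ≤ min c (1 - c) := le_min hc.1 (sub_nonneg.mpr hc.2)
  have min_le_half : min c (1 - c) ≤ 1 / 2 := by
    linarith [min_le_left c (1 - c), min_le_right c (1 - c)]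
  calc k * min c (1 - c) * x ≤ k * min c (1 - c) * x⁺ := by gcongr; exact le_posPart x
    _ ≤ k * (1 / 2) * x⁺ := by gcongr
    _ = k / 2 * x⁺ := by ring

/-- Hellinger form of Assouad's lemma. If `He²(P_θ, P_{θ'}) ≤ α` whenever
`θ, θ' ∈ {−1,1}^d` (encoded as `Fin d → Bool`) differ in exactly one coordinate, then the
minimax risk under Hamming loss from `n` i.i.d. observations satisfies
`R*_{ρ_Ha} ≥ d · min(c, 1−c) · (1 − √(α·n))`. -/
theorem assouad_hellinger_form
    {O : Type*} [MeasurableSpace O] (d n : ℕ)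
    (P : (Fin d → Bool) → Measure O) [∀ θ, IsProbabilityMeasure (P θ)]
    (c : ℝ) (hc : c ∈ Set.Icc (0 : ℝ) 1)
    (α : ℝ) (hα : 0 ≤ α)
    (hHe : ∀ θ θ' : Fin d → Bool, hammingDist θ θ' = 1 → hellingerSq (P θ) (P θ') ≤ α) :
    (⨅ κ : {κ : Kernel (Fin n → O) (Fin d → Bool) // IsMarkovKernel κ},
      ⨆ θ : Fin d → Bool,
        ∫ o, (∫ t, (hammingDist θ t : ℝ) ∂(κ.1 o)) ∂(Measure.pi fun _ : Fin n => P θ))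
    ≥ d * min c (1 - c) * (1 - Real.sqrt (α * n)) := by
  have hHe_pi (θ θ' : Fin d → Bool) (h : hammingDist θ θ' = 1) :
      hellingerSq (Measure.pi fun _ : Fin n ↦ P θ) (Measure.pi fun _ ↦ P θ') ≤ α * n := by
    calc _ ≤ ∑ _ : Fin n, hellingerSq (P θ) (P θ') := hellingerSq_pi_le_sum _ _
      _ ≤ ∑ _ : Fin n, α := by gcongr; exact hHe θ θ' h
      _ = α * n := by simp [mul_comm]
  refine (mul_min_one_sub_mul_le_half_mul_posPart hc d.cast_nonneg _).trans ?_
  simpa only [Fintype.card_fin, hammingMinimaxRisk] using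
    half_card_mul_posPart_le_hammingMinimaxRisk hHe_pi
end
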